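/- Let β ∈ (0,1). The derivative at 0 of the return map F_β equals F_β′(0) = (1+β)(1+2β)/((2−β)(2+β)) = (2β²+3β+1)/(4−β²), and this quantity satisfies the trichotomy: F_β′(0) < 1 if and only if β < σ; F_β′(0) = 1 if and only if β = σ; and F_β′(0) > 1 if and only if β > σ. -/

import Mathlib

/-- The one-dimensional return map on the indifference set J of the Shapley
family. -/
noncomputable def retMap (β X : ℝ) : ℝ :=
  X*(1 + β)*(1 + 2*β)*(1 - β + β^2)
    / ((2 - β)*(3*(1 + β)^2*X + (2 + β)*(1 - β + β^2)))

/-!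
The return map is a linear fractional transformation `X ↦ a X / (c X + d)`, so its derivative at `0`
is `a / d`. Subtracting `1` leaves `3 (β² + β - 1) / (4 - β²)`. Since `β² + β - 1` is the golden
ratio polynomial `x² - x - 1` at `x = -β`, it factors as `(β + φ) (β - σ)` with `σ = -ψ`. For
`-φ < β < 2` both `β + φ` and `4 - β²` are positive, so the difference has the sign of `β - σ`.
-/

open Real goldenRatio

theorem hasDerivAt_linear_div_linear {𝕜 : Type*} [NontriviallyNormedField 𝕜] (a b c d : 𝕜) {x : 𝕜}
    (hx : c * x + d ≠ 0) :
    HasDerivAt (fun y ↦ (a * y + b) / (c * y + d)) ((a * d - b * c) / (c * x + d) ^ 2) x := by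
  have hnum : HasDerivAt (fun y ↦ a * y + b) a x := (hasDerivAt_const_mul a).add_const b
  have hden : HasDerivAt (fun y ↦ c * y + d) c x := (hasDerivAt_const_mul c).add_const d
  exact (hnum.fun_div hden hx).congr_deriv (by ring)

theorem retMap_eq_linear_div_linear (β : ℝ) :
    retMap β = fun X ↦ ((1 + β) * (1 + 2 * β) * (1 - β + β ^ 2) * X + 0) /
      ((2 - β) * (3 * (1 + β) ^ 2) * X + (4 - β ^ 2) * (1 - β + β ^ 2)) := by
  funext X
  unfold retMap
  congr 1 <;> ring

theorem hasDerivAt_retMap_zero {β : ℝ} (hβ : 4 - β ^ 2 ≠ 0) :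
    HasDerivAt (retMap β) ((2 * β ^ 2 + 3 * β + 1) / (4 - β ^ 2)) 0 := by
  have hquad : 1 - β + β ^ 2 ≠ 0 := by nlinarith [sq_nonneg (2 * β - 1)]
  rw [retMap_eq_linear_div_linear]
  refine (hasDerivAt_linear_div_linear _ _ _ _ (by simp [hβ, hquad])).congr_deriv ?_
  field_simp
  ring

theorem sq_add_self_sub_one_eq_mul (x : ℝ) :
    x ^ 2 + x - 1 = (x + φ) * (x + ψ) := by
  linear_combination -x * goldenRatio_add_goldenConj - goldenRatio_mul_goldenConj

theorem four_sub_sq_pos_of_mem_Ioo {β : ℝ} (hβ : β ∈ Set.Ioo (-φ) 2) :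
    0 < 4 - β ^ 2 := by
  have hneg_two : -2 < β := (neg_lt_neg goldenRatio_lt_two).trans hβ.1
  calc
    0 < (2 - β) * (2 + β) := mul_pos (sub_pos.mpr hβ.2) (neg_lt_iff_pos_add'.mp hneg_two)
    _ = 4 - β ^ 2 := by ring

theorem exists_pos_deriv_retMap_zero_sub_one_eq_mul {β : ℝ} (hβ : β ∈ Set.Ioo (-φ) 2) :
    ∃ c > 0, deriv (retMap β) 0 - 1 = c * (β + ψ) := by
  have hden := four_sub_sq_pos_of_mem_Ioo hβ
  have hφ : 0 < β + φ := neg_lt_iff_pos_add.mp hβ.1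
  refine ⟨3 * (β + φ) / (4 - β ^ 2), by positivity, ?_⟩
  rw [(hasDerivAt_retMap_zero hden.ne').deriv, div_sub_one hden.ne', div_mul_eq_mul_div]
  congr 1
  linear_combination 3 * sq_add_self_sub_one_eq_mul β

theorem deriv_retMap_zero_lt_one_iff {β : ℝ} (hβ : β ∈ Set.Ioo (-φ) 2) :
    deriv (retMap β) 0 < 1 ↔ β < -ψ := by
  obtain ⟨c, hc, h⟩ := exists_pos_deriv_retMap_zero_sub_one_eq_mul hβ
  rw [← sub_neg, h, ← smul_eq_mul, smul_neg_iff_of_pos_left hc, lt_neg_iff_add_neg]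

theorem deriv_retMap_zero_eq_one_iff {β : ℝ} (hβ : β ∈ Set.Ioo (-φ) 2) :
    deriv (retMap β) 0 = 1 ↔ β = -ψ := by
  obtain ⟨c, hc, h⟩ := exists_pos_deriv_retMap_zero_sub_one_eq_mul hβ
  rw [← sub_eq_zero, h, mul_eq_zero_iff_left hc.ne', add_eq_zero_iff_eq_neg]

theorem one_lt_deriv_retMap_zero_iff {β : ℝ} (hβ : β ∈ Set.Ioo (-φ) 2) :
    1 < deriv (retMap β) 0 ↔ -ψ < β := by
  obtain ⟨c, hc, h⟩ := exists_pos_deriv_retMap_zero_sub_one_eq_mul hβ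
  rw [← sub_pos, h, mul_pos_iff_of_pos_left hc, neg_lt_iff_pos_add]

theorem stmt15_general (β : ℝ) (hβ : β ∈ Set.Ioo (-φ) 2) :
    HasDerivAt (retMap β) ((2*β^2 + 3*β + 1)/(4 - β^2)) 0 ∧
    (1 + β)*(1 + 2*β)/((2 - β)*(2 + β)) = (2*β^2 + 3*β + 1)/(4 - β^2) ∧
    ((2*β^2 + 3*β + 1)/(4 - β^2) < 1 ↔ β < (Real.sqrt 5 - 1)/2) ∧
    ((2*β^2 + 3*β + 1)/(4 - β^2) = 1 ↔ β = (Real.sqrt 5 - 1)/2) ∧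
    (1 < (2*β^2 + 3*β + 1)/(4 - β^2) ↔ (Real.sqrt 5 - 1)/2 < β) := by
  have hderiv := hasDerivAt_retMap_zero (four_sub_sq_pos_of_mem_Ioo hβ).ne'
  have hσ : (√5 - 1) / 2 = -ψ := by rw [goldenConj]; ring
  refine ⟨hderiv, by congr 1 <;> ring, ?_, ?_, ?_⟩
  all_goals rw [hσ, ← hderiv.deriv]
  · exact deriv_retMap_zero_lt_one_iff hβ
  · exact deriv_retMap_zero_eq_one_iff hβ
  · exact one_lt_deriv_retMap_zero_iff hβ

/-- for β ∈ (0,1), F_β′(0) = (1+β)(1+2β)/((2−β)(2+β))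
= (2β²+3β+1)/(4−β²), and this quantity is <1, =1, >1 according as β is
less than, equal to, or greater than the golden mean σ = (√5−1)/2. -/
theorem stmt15 (β : ℝ) (hβ : β ∈ Set.Ioo (0 : ℝ) 1) :
    HasDerivAt (retMap β) ((2*β^2 + 3*β + 1)/(4 - β^2)) 0 ∧
    (1 + β)*(1 + 2*β)/((2 - β)*(2 + β)) = (2*β^2 + 3*β + 1)/(4 - β^2) ∧
    ((2*β^2 + 3*β + 1)/(4 - β^2) < 1 ↔ β < (Real.sqrt 5 - 1)/2) ∧
    ((2*β^2 + 3*β + 1)/(4 - β^2) = 1 ↔ β = (Real.sqrt 5 - 1)/2) ∧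
    (1 < (2*β^2 + 3*β + 1)/(4 - β^2) ↔ (Real.sqrt 5 - 1)/2 < β) :=
  stmt15_general β ⟨(neg_neg_of_pos goldenRatio_pos).trans hβ.1, hβ.2.trans one_lt_two⟩
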